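/- Let z₁ < z₂ be real numbers with F(z₁) ≠ ∅ and F(z₂) ≠ ∅. Then the function ψ is continuous on the closed interval [z₁, z₂]. -/

import Mathlib

open Matrix BigOperators

/-- Feasible region of the sub-problem `(D^z)`. -/
def Dfeas {m n : ℕ} (A : Matrix (Fin m) (Fin n) ℝ) (d x0 : Fin n → ℝ) (z : ℝ) :
    Set (Fin n → ℝ) :=
  {y | A.mulVec y = 0 ∧
    (∀ j, x0 j = 0 → -d j ≤ y j ∧ y j ≤ 0) ∧
    (∀ j, 0 < x0 j → x0 j * z - d j ≤ y j ∧ y j ≤ x0 j * z + d j)}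

/-- `ψ(z) = sup {c·y : y ∈ F(z)}`. -/
noncomputable def psi {m n : ℕ} (A : Matrix (Fin m) (Fin n) ℝ)
    (c d x0 : Fin n → ℝ) (z : ℝ) : ℝ :=
  sSup ((fun y => c ⬝ᵥ y) '' Dfeas A d x0 z)

/-! The graph `{(z, y) | y ∈ F(z)}` is a closed convex set whose part over a bounded set of `z` is
bounded. Convexity makes `ψ` concave on its effective domain, and a concave function of one real
variable is lower semicontinuous even at the endpoints of its domain, because there it lies above
its chords. Closedness and local boundedness make `F` upper hemicontinuous with compact values, so
that its value function `ψ` is upper semicontinuous. -/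

section ValueFunction

open Set Filter Topology

theorem exists_Iic_mem_nhdsWithin {α : Type*} [LinearOrder α] [TopologicalSpace α]
    [ClosedIciTopology α] {s : Set α} {x : α} (hx : x ∈ s) :
    ∃ v ∈ s, x ≤ v ∧ Iic v ∈ 𝓝[s] x := by
  by_cases! h : ∃ v ∈ s, x < v
  · obtain ⟨v, hv, hxv⟩ := h
    exact ⟨v, hv, hxv.le, mem_nhdsWithin_of_mem_nhds (Iic_mem_nhds hxv)⟩
  · exact ⟨x, hx, le_rfl, mem_of_superset self_mem_nhdsWithin h⟩

theorem exists_Icc_mem_nhdsWithin {α : Type*} [LinearOrder α] [TopologicalSpace α]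
    [OrderClosedTopology α] {s : Set α} {x : α} (hx : x ∈ s) :
    ∃ u ∈ s, ∃ v ∈ s, u ≤ x ∧ x ≤ v ∧ Icc u v ∈ 𝓝[s] x := by
  obtain ⟨u, hu, hux, hu_nhds⟩ := exists_Iic_mem_nhdsWithin (α := αᵒᵈ) hx
  obtain ⟨v, hv, hxv, hv_nhds⟩ := exists_Iic_mem_nhdsWithin hx
  exact ⟨u, hu, v, hv, hux, hxv, inter_mem hu_nhds hv_nhds⟩

theorem lowerSemicontinuousWithinAt_segment_of_concaveOn {s : Set ℝ} {f : ℝ → ℝ}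
    (hf : ConcaveOn ℝ s f) {x v : ℝ} (hx : x ∈ s) (hv : v ∈ s) :
    LowerSemicontinuousWithinAt f (segment ℝ x v) x := by
  rcases eq_or_ne x v with rfl | hxv
  · intro a ha
    simpa only [segment_same, nhdsWithin_singleton, eventually_pure] using ha
  let chord (z : ℝ) : ℝ := AffineMap.lineMap (f x) (f v) ((z - x) / (v - x))
  have chord_le : ∀ z ∈ segment ℝ x v, chord z ≤ f z := by
    rw [segment_eq_image_lineMap]
    rintro _ ⟨t, ht, rfl⟩
    have h_ratio : (AffineMap.lineMap x v t - x) / (v - x) = t := by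
      rw [AffineMap.lineMap_apply_ring', add_sub_cancel_right,
        mul_div_cancel_right₀ _ (sub_ne_zero.mpr hxv.symm)]
    dsimp only [chord]
    rw [h_ratio, AffineMap.lineMap_apply_module, AffineMap.lineMap_apply_module]
    exact hf.2 hx hv (sub_nonneg.mpr ht.2) ht.1 (sub_add_cancel 1 t)
  have chord_continuous : Continuous chord := by
    simp only [chord, AffineMap.lineMap_apply_module]
    fun_prop
  have chord_self : chord x = f x := by
    simp only [chord, sub_self, zero_div, AffineMap.lineMap_apply_zero]
  intro a ha
  have h_near : ∀ᶠ z in 𝓝[segment ℝ x v] x, a < chord z :=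
    (chord_continuous.tendsto x).mono_left nhdsWithin_le_nhds
      |>.eventually_const_lt (chord_self.symm ▸ ha)
  filter_upwards [h_near, self_mem_nhdsWithin] with z hz hz_mem
  exact hz.trans_le (chord_le z hz_mem)

theorem lowerSemicontinuousOn_of_concaveOn {s : Set ℝ} {f : ℝ → ℝ} (hf : ConcaveOn ℝ s f) :
    LowerSemicontinuousOn f s := by
  intro x hx a ha
  obtain ⟨u, hu, v, hv, hux, hxv, h_nhds⟩ := exists_Icc_mem_nhdsWithin hx
  have h_union : Icc u v = segment ℝ x u ∪ segment ℝ x v := by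
    rw [segment_symm, segment_eq_Icc hux, segment_eq_Icc hxv, Icc_union_Icc_eq_Icc hux hxv]
  refine nhdsWithin_le_of_mem h_nhds ?_
  rw [h_union, nhdsWithin_union]
  exact ⟨lowerSemicontinuousWithinAt_segment_of_concaveOn hf hx hu a ha,
    lowerSemicontinuousWithinAt_segment_of_concaveOn hf hx hv a ha⟩

theorem convex_domain_of_convex_graph {E Y : Type*} [AddCommMonoid E] [Module ℝ E]
    [AddCommMonoid Y] [Module ℝ Y] {F : E → Set Y} (hF : Convex ℝ {p : E × Y | p.2 ∈ F p.1}) :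
    Convex ℝ {x | (F x).Nonempty} := by
  rintro x ⟨p, hp⟩ y ⟨q, hq⟩ a b ha hb hab
  exact ⟨_, hF (x := (x, p)) hp (y := (y, q)) hq ha hb hab⟩

theorem concaveOn_sSup_image {E Y : Type*} [AddCommMonoid E] [Module ℝ E] [AddCommMonoid Y]
    [Module ℝ Y] {F : E → Set Y} {f : Y → ℝ} {t : Set Y}
    (hF : Convex ℝ {p : E × Y | p.2 ∈ F p.1}) (hf : ConcaveOn ℝ t f) (hFt : ∀ x, F x ⊆ t)
    (hbdd : ∀ x, BddAbove (f '' F x)) :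
    ConcaveOn ℝ {x | (F x).Nonempty} (fun x => sSup (f '' F x)) := by
  refine ⟨convex_domain_of_convex_graph hF, fun x hx y hy a b ha hb hab => ?_⟩
  dsimp only
  rw [← Real.sSup_smul_of_nonneg ha, ← Real.sSup_smul_of_nonneg hb,
    ← csSup_add ((hx.image f).smul_set) ((hbdd x).smul_of_nonneg ha)
      ((hy.image f).smul_set) ((hbdd y).smul_of_nonneg hb)]
  refine csSup_le (((hx.image f).smul_set).add ((hy.image f).smul_set)) ?_
  rintro _ ⟨_, ⟨_, ⟨p, hp, rfl⟩, rfl⟩, _, ⟨_, ⟨q, hq, rfl⟩, rfl⟩, rfl⟩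
  exact (hf.2 (hFt x hp) (hFt y hq) ha hb hab).trans
    (le_csSup (hbdd _) ⟨_, hF (x := (x, p)) hp (y := (y, q)) hq ha hb hab, rfl⟩)

theorem upperSemicontinuousOn_sSup_image {X Y β : Type*} [TopologicalSpace X]
    [TopologicalSpace Y] [ConditionallyCompleteLinearOrder β] {F : X → Set Y} {f : Y → β}
    {s : Set X} (hF : UpperHemicontinuousOn F s) (hF_compact : ∀ x ∈ s, IsCompact (F x))
    (hF_nonempty : ∀ x ∈ s, (F x).Nonempty) (hf : UpperSemicontinuous f) :
    UpperSemicontinuousOn (fun x => sSup (f '' F x)) s := by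
  intro x hx a ha
  have h_bdd : BddAbove (f '' F x) :=
    (hf.upperSemicontinuousOn _).bddAbove_of_isCompact (hF_compact x hx)
  have h_sub : F x ⊆ f ⁻¹' Iio a := fun y hy => (le_csSup h_bdd ⟨y, hy, rfl⟩).trans_lt ha
  filter_upwards [hF.forall_isOpen x hx _ (hf.isOpen_preimage a) h_sub, self_mem_nhdsWithin]
    with x' h_sub' hx'
  obtain ⟨y, hy, hy_max⟩ := (hf.upperSemicontinuousOn _).exists_isMaxOn
    (hF_nonempty x' hx') (hF_compact x' hx')
  have h_greatest : IsGreatest (f '' F x') (f y) :=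
    ⟨⟨y, hy, rfl⟩, forall_mem_image.mpr hy_max⟩
  exact h_greatest.csSup_eq.trans_lt (h_sub' hy)

theorem continuousOn_sSup_image {Y : Type*} [TopologicalSpace Y] [AddCommMonoid Y] [Module ℝ Y]
    {F : ℝ → Set Y} {f : Y → ℝ} {t : Set Y} (hF_convex : Convex ℝ {p : ℝ × Y | p.2 ∈ F p.1})
    (hF : UpperHemicontinuous F) (hF_compact : ∀ z, IsCompact (F z)) (hFt : ∀ z, F z ⊆ t)
    (hf_concave : ConcaveOn ℝ t f) (hf : UpperSemicontinuous f) :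
    ContinuousOn (fun z => sSup (f '' F z)) {z | (F z).Nonempty} := by
  refine continuousOn_iff_lower_upperSemicontinuousOn.mpr
    ⟨lowerSemicontinuousOn_of_concaveOn (concaveOn_sSup_image hF_convex hf_concave hFt ?_),
      upperSemicontinuousOn_sSup_image (hF.upperHemicontinuousOn _) (fun z _ => hF_compact z)
        (fun _ hz => hz) hf⟩
  exact fun z => (hf.upperSemicontinuousOn _).bddAbove_of_isCompact (hF_compact z)

end ValueFunction

section FeasibleRegion

open Set Filter Topology

variable {m n : ℕ} (A : Matrix (Fin m) (Fin n) ℝ) (d x0 : Fin n → ℝ)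

theorem convex_graph_dfeas :
    Convex ℝ {p : ℝ × (Fin n → ℝ) | p.2 ∈ Dfeas A d x0 p.1} := by
  rintro ⟨z, y⟩ ⟨hAy, hy_zero, hy_pos⟩ ⟨w, v⟩ ⟨hAv, hv_zero, hv_pos⟩ a b ha hb hab
  obtain rfl : b = 1 - a := eq_sub_of_add_eq' hab
  refine ⟨?_, fun j hj => ?_, fun j hj => ?_⟩ <;>
    dsimp only [Prod.smul_mk, Prod.mk_add_mk, Pi.add_apply, Pi.smul_apply, smul_eq_mul] at *
  · rw [mulVec_add, mulVec_smul, mulVec_smul, hAy, hAv, smul_zero, smul_zero, add_zero]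
  · have hy_lower := mul_le_mul_of_nonneg_left (hy_zero j hj).1 ha
    have hy_upper := mul_le_mul_of_nonneg_left (hy_zero j hj).2 ha
    have hv_lower := mul_le_mul_of_nonneg_left (hv_zero j hj).1 hb
    have hv_upper := mul_le_mul_of_nonneg_left (hv_zero j hj).2 hb
    constructor <;> linarith
  · have hy_lower := mul_le_mul_of_nonneg_left (hy_pos j hj).1 ha
    have hy_upper := mul_le_mul_of_nonneg_left (hy_pos j hj).2 ha
    have hv_lower := mul_le_mul_of_nonneg_left (hv_pos j hj).1 hb
    have hv_upper := mul_le_mul_of_nonneg_left (hv_pos j hj).2 hb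
    constructor <;> linarith

theorem isClosed_graph_dfeas :
    IsClosed {p : ℝ × (Fin n → ℝ) | p.2 ∈ Dfeas A d x0 p.1} := by
  simp only [Dfeas, mem_ofPred_eq]
  simp only [ofPred_and, ofPred_forall]
  refine (isClosed_eq (by fun_prop) continuous_const).inter (.inter ?_ ?_) <;>
    exact isClosed_iInter fun j => isClosed_iInter fun _ =>
      (isClosed_le (by fun_prop) (by fun_prop)).inter (isClosed_le (by fun_prop) (by fun_prop))

variable {x0}

theorem dfeas_subset_Icc (hx0 : ∀ j, 0 ≤ x0 j) {a b z : ℝ} (hz : z ∈ Icc a b) :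
    Dfeas A d x0 z ⊆ Icc (fun j => x0 j * a - d j) (fun j => x0 j * b + d j) := by
  rintro y ⟨-, hy_zero, hy_pos⟩
  have h_lower (j : Fin n) : x0 j * a ≤ x0 j * z := mul_le_mul_of_nonneg_left hz.1 (hx0 j)
  have h_upper (j : Fin n) : x0 j * z ≤ x0 j * b := mul_le_mul_of_nonneg_left hz.2 (hx0 j)
  have hy (j : Fin n) : x0 j * z - d j ≤ y j ∧ y j ≤ x0 j * z + d j := by
    rcases (hx0 j).eq_or_lt with hj | hj
    · obtain ⟨hy_lower, hy_upper⟩ := hy_zero j hj.symm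
      rw [← hj]
      constructor <;> linarith
    · exact hy_pos j hj
  exact ⟨fun j => by linarith [h_lower j, (hy j).1], fun j => by linarith [h_upper j, (hy j).2]⟩

theorem isCompact_dfeas (hx0 : ∀ j, 0 ≤ x0 j) (z : ℝ) : IsCompact (Dfeas A d x0 z) :=
  isCompact_Icc.of_isClosed_subset
    ((isClosed_graph_dfeas A d x0).preimage (Continuous.prodMk_right z))
    (dfeas_subset_Icc A d hx0 (left_mem_Icc.mpr le_rfl))

theorem upperHemicontinuous_dfeas (hx0 : ∀ j, 0 ≤ x0 j) : UpperHemicontinuous (Dfeas A d x0) := by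
  refine upperHemicontinuous_iff.mpr fun z => ?_
  have h_bdd : ∀ᶠ w in 𝓝 z, Dfeas A d x0 w ⊆
      Icc (fun j => x0 j * (z - 1) - d j) (fun j => x0 j * (z + 1) + d j) := by
    filter_upwards [Icc_mem_nhds (sub_one_lt z) (lt_add_one z)] with w hw
    exact dfeas_subset_Icc A d hx0 hw
  refine .of_sequences isCompact_Icc.isSeqCompact h_bdd fun w hw y hy y₀ hy₀ => ?_
  exact (isClosed_graph_dfeas A d x0).mem_of_tendsto (hw.prodMk_nhds hy₀) (.of_forall hy)

end FeasibleRegion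

theorem psi_continuousOn_general {m n : ℕ} (A : Matrix (Fin m) (Fin n) ℝ)
    (c d x0 : Fin n → ℝ) (hx0 : ∀ j, 0 ≤ x0 j) :
    ContinuousOn (psi A c d x0) {z | (Dfeas A d x0 z).Nonempty} :=
  continuousOn_sSup_image (convex_graph_dfeas A d x0) (upperHemicontinuous_dfeas A d hx0)
    (isCompact_dfeas A d hx0) (fun _ => Set.subset_univ _)
    ((dotProductBilin ℝ ℝ c).concaveOn convex_univ)
    (continuous_const.dotProduct continuous_id).upperSemicontinuous

/-- `ψ` is continuous on `[z₁, z₂]` whenever `F(z₁)` and `F(z₂)` are nonempty. -/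
theorem psi_continuousOn {m n : ℕ} (A : Matrix (Fin m) (Fin n) ℝ)
    (c d x0 : Fin n → ℝ) (hd : ∀ j, 0 < d j) (hx0 : ∀ j, 0 ≤ x0 j)
    (z₁ z₂ : ℝ) (h12 : z₁ < z₂)
    (h1 : (Dfeas A d x0 z₁).Nonempty) (h2 : (Dfeas A d x0 z₂).Nonempty) :
    ContinuousOn (psi A c d x0) (Set.Icc z₁ z₂) :=
  (psi_continuousOn_general A c d x0 hx0).mono
    ((convex_domain_of_convex_graph (convex_graph_dfeas A d x0)).ordConnected.out h1 h2)
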